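/- arXiv:2312.15833 — 2 statements merged into one kernel-verified Lean document; each statement's English description precedes it below -/
import Mathlib

section
/- There exist a positive absolute constant C_0 ≥ 2 and positive absolute constants C, c such that for every positive integer n, every β > 0, every s ∈ [n], every t ∈ [n], and every real r ≥ C_0 max{β^{-1}, 1}, the complement of the event K_{t,r} satisfies P((K_{t,r})^c) ≤ C r^2 t max{β^{-6}, 1} exp(-c min{β^{1/2}, 1} √r). -/
/-!
Write `b = min {β, 1}`.  If every `k ∈ H_l` satisfies `l - k ≤ r / 2`, then `#H_l ≤ r / 2` and
`N_l ≤ 1 + r / 2 ≤ r`, so both requirements defining `K_{t,r}` hold at `l` (`Kevent_at`).  A union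
bound over `l` and over `k < l - r / 2` therefore reduces everything to the exponential bound
`P(b_k ≥ l) ≤ C exp (-c b (l - k))` with absolute constants (`hitRun_bVal_le`); the weaker rate
`√(b r)` follows as `b r ≥ 1`.

The exponential bound comes from swap arguments.  Fix `k < l` and let `D` be the number of
`i < l` with `σ i ≥ l`, which equals the number of `j ≥ l` with `σ j < l`.

* Uncrossing: replacing `σ` by `σ * swap k j`, where `σ k ≥ l` and `j` is one of the `D`
  down-crossers, lowers `∑ |σ i - i|` by twice the overlap of `[k, σ k]` and `[σ j, j]`.  Summing
  over `j` gives `E[D; σ k ≥ l] ≤ (3 / b) E[exp (-2b (l - max {k, σ k})); σ k < l]`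
  (`crossMass_le`).
* Crossing: swapping two non-crossing positions within distance `w ≈ 1 / b` on either side of `l`
  costs only a constant factor and keeps `σ k`, and there are about `w²` such pairs while the
  result has at most `D²` preimages.  Hence `E[D; σ k ≥ l] ≥ (c / b) P(σ k ≥ l)`
  (`window_tailMass_le`), when `l` is not within `w` of the ends of `[n]`.

Together, `P(σ k ≥ l) ≤ C E[exp (-2b (l - max {k, σ k})); σ k < l]` (`tailMass_le`), which says that
`V_l = E[exp (-2b (l - max {k, σ k})₊)]` satisfies `P(σ k ≥ l) ≤ θ V_l` with an absolute `θ < 1`.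
Since `V_{l+1} = exp (-2b) V_l + (1 - exp (-2b)) P(σ k ≥ l + 1)`, `V` contracts by a factor
`exp (-c b)` at each step (`softTail_step`), and `P(b_k ≥ l) ≤ V_l` because `b ≤ β`.
-/

open scoped BigOperators Classical ENNReal
open MeasureTheory

/-- The (unnormalized) Mallows weight `exp(-β ∑ᵢ |σ(i) - i|)` for the `L¹` distance.
Permutations of `[n] = {1, …, n}` are modeled as permutations of `Fin n`. -/
noncomputable def mallowsWeight (n : ℕ) (β : ℝ) (σ : Equiv.Perm (Fin n)) : ℝ :=
  Real.exp (-β * ∑ i : Fin n, |((σ i : ℕ) : ℝ) - ((i : ℕ) : ℝ)|)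

/-- The probability of `σ` under the Mallows permutation model `P_{n,β}`. -/
noncomputable def mallowsProb (n : ℕ) (β : ℝ) (σ : Equiv.Perm (Fin n)) : ℝ :=
  mallowsWeight n β σ / ∑ τ : Equiv.Perm (Fin n), mallowsWeight n β τ

instance (n : ℕ) : MeasurableSpace (Equiv.Perm (Fin n)) := ⊤

/-- The Mallows model `P_{n,β}` as a measure on `S_n`. -/
noncomputable def mallowsMeasure (n : ℕ) (β : ℝ) : Measure (Equiv.Perm (Fin n)) :=
  ∑ σ : Equiv.Perm (Fin n),
    ENNReal.ofReal (mallowsProb n β σ) • MeasureTheory.Measure.dirac σ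

/-- The probability space carrying `σ₀ ~ P_{n,β}` together with `n` i.i.d. exponential
random variables `E₁, …, E_n` of rate `2β`, independent of `σ₀`.  A sample point is
`ω = (σ₀, (E_k)_{k ∈ [n]})`. -/
noncomputable def hitRunMeasure (n : ℕ) (β : ℝ) :
    Measure (Equiv.Perm (Fin n) × (Fin n → ℝ)) :=
  (mallowsMeasure n β).prod
    (Measure.pi fun _ : Fin n => ProbabilityTheory.expMeasure (2 * β))

/-- `b_k = max{k, σ₀(k)} + E_k` (so that, conditionally on `σ₀`,
`P(b_k ≥ x | σ₀) = exp(-2β (x - max{k, σ₀(k)})₊)`).  In `Fin n` coordinates all the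
`b_k` and the thresholds `j` are shifted by one simultaneously. -/
noncomputable def bVal (n : ℕ) (ω : Equiv.Perm (Fin n) × (Fin n → ℝ)) (k : Fin n) : ℝ :=
  max ((k : ℕ) : ℝ) ((ω.1 k : ℕ) : ℝ) + ω.2 k

/-- `H_j = {k ∈ [n] : k ≤ j - 1, b_k ≥ j}`. -/
noncomputable def Hset (n : ℕ) (ω : Equiv.Perm (Fin n) × (Fin n → ℝ)) (j : Fin n) :
    Finset (Fin n) :=
  Finset.univ.filter fun k => k < j ∧ ((j : ℕ) : ℝ) ≤ bVal n ω k

/-- `N_j = 1 + #{k ∈ [n] : k ≤ j - 1, b_k ≥ j}`. -/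
noncomputable def Nval (n : ℕ) (ω : Equiv.Perm (Fin n) × (Fin n → ℝ)) (j : Fin n) : ℕ :=
  1 + (Hset n ω j).card

/-- The event `K_{t,r}` (for a fixed `s ∈ [n]`): for every `l ∈ [n]` with
`s - r t min{β,1}⁻⁴ ≤ l ≤ s`, one has `max_{j ∈ H_l} (l - j) ≤ r` (maximum over the
empty set being `0`) and `N_l ≤ r min{β,1}⁻¹`.  The inequalities are invariant under
the common index shift between `[n]` and `Fin n`. -/
def Kevent (n : ℕ) (β : ℝ) (s : Fin n) (t : ℕ) (r : ℝ) :
    Set (Equiv.Perm (Fin n) × (Fin n → ℝ)) :=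
  {ω | ∀ l : Fin n,
    ((s : ℕ) : ℝ) - r * t * (min β 1 ^ 4)⁻¹ ≤ ((l : ℕ) : ℝ) → l ≤ s →
      ((((Hset n ω l).sup fun j => (l : ℕ) - (j : ℕ)) : ℕ) : ℝ) ≤ r ∧
        (Nval n ω l : ℝ) ≤ r * (min β 1)⁻¹}

/-! ### Crossings of a level and uncrossing swaps -/

/-- The `L¹` displacement `∑ᵢ |σ(i) - i|`. -/
noncomputable def l1Cost {n : ℕ} (σ : Equiv.Perm (Fin n)) : ℝ :=
  ∑ i : Fin n, |((σ i : ℕ) : ℝ) - ((i : ℕ) : ℝ)|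

/-- The positions below level `l` which `σ` sends to level `l` or above. -/
def upCross {n : ℕ} (l : ℕ) (σ : Equiv.Perm (Fin n)) : Finset (Fin n) :=
  Finset.univ.filter fun i => (i : ℕ) < l ∧ l ≤ (σ i : ℕ)

/-- The positions at level `l` or above which `σ` sends below level `l`. -/
def downCross {n : ℕ} (l : ℕ) (σ : Equiv.Perm (Fin n)) : Finset (Fin n) :=
  Finset.univ.filter fun i => l ≤ (i : ℕ) ∧ (σ i : ℕ) < l

lemma card_downCross {n : ℕ} (l : ℕ) (σ : Equiv.Perm (Fin n)) :
    (downCross l σ).card = (upCross l σ).card := by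
  have h := Equiv.sum_comp σ (fun i : Fin n => if (i : ℕ) < l then 1 else 0)
  have h2 : (downCross l σ).card + ∑ i : Fin n, (if (i : ℕ) < l then 1 else 0)
      = (upCross l σ).card + ∑ i : Fin n, (if (σ i : ℕ) < l then 1 else 0) := by
    unfold downCross upCross
    rw [Finset.card_filter, Finset.card_filter, ← Finset.sum_add_distrib,
      ← Finset.sum_add_distrib]
    refine Finset.sum_congr rfl fun i _ => ?_
    split_ifs <;> omega
  omega

/-- Uncrossing an up-crosser `i` and a down-crosser `j` lowers the displacement by twice the
overlap of the intervals `[i, σ i]` and `[σ j, j]`.  The statement is phrased for the uncrossed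
permutation `σ`, with `σ * swap i j` the crossed one. -/
lemma l1Cost_mul_swap {n l : ℕ} (σ : Equiv.Perm (Fin n)) (i j : Fin n)
    (hi : (i : ℕ) < l) (hj : l ≤ (j : ℕ)) (hsi : (σ i : ℕ) < l) (hsj : l ≤ (σ j : ℕ)) :
    l1Cost (σ * Equiv.swap i j) = l1Cost σ
      + 2 * (min ((j : ℕ) : ℝ) ((σ j : ℕ) : ℝ) - max ((i : ℕ) : ℝ) ((σ i : ℕ) : ℝ)) := by
  have hij : i ≠ j := by rintro rfl; omega
  have hsplit : ∀ f : Fin n → ℝ, ∑ x, f x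
      = f i + f j + ∑ x ∈ (Finset.univ.erase i).erase j, f x := by
    intro f
    rw [← Finset.add_sum_erase _ f (Finset.mem_univ i),
      ← Finset.add_sum_erase _ f (Finset.mem_erase.2 ⟨hij.symm, Finset.mem_univ j⟩), add_assoc]
  unfold l1Cost
  rw [hsplit, hsplit (fun x => |((σ x : ℕ) : ℝ) - ((x : ℕ) : ℝ)|)]
  have hrest : ∑ x ∈ (Finset.univ.erase i).erase j,
        |((((σ * Equiv.swap i j) x : Fin n) : ℕ) : ℝ) - ((x : ℕ) : ℝ)|
      = ∑ x ∈ (Finset.univ.erase i).erase j, |((σ x : ℕ) : ℝ) - ((x : ℕ) : ℝ)| := by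
    refine Finset.sum_congr rfl fun x hx => ?_
    simp only [Finset.mem_erase] at hx
    rw [Equiv.Perm.mul_apply, Equiv.swap_apply_of_ne_of_ne hx.2.1 hx.1]
  rw [hrest]
  simp only [Equiv.Perm.mul_apply, Equiv.swap_apply_left, Equiv.swap_apply_right]
  have hi' : ((i : ℕ) : ℝ) < l := by exact_mod_cast hi
  have hj' : (l : ℝ) ≤ ((j : ℕ) : ℝ) := by exact_mod_cast hj
  have hsi' : ((σ i : ℕ) : ℝ) < l := by exact_mod_cast hsi
  have hsj' : (l : ℝ) ≤ ((σ j : ℕ) : ℝ) := by exact_mod_cast hsj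
  rw [abs_of_nonneg (by linarith : (0:ℝ) ≤ ((σ j : ℕ) : ℝ) - ((i : ℕ) : ℝ)),
    abs_of_nonpos (by linarith : ((σ i : ℕ) : ℝ) - ((j : ℕ) : ℝ) ≤ 0)]
  rcases le_total ((i : ℕ) : ℝ) ((σ i : ℕ) : ℝ) with h1 | h1 <;>
  rcases le_total ((j : ℕ) : ℝ) ((σ j : ℕ) : ℝ) with h2 | h2
  · rw [max_eq_right h1, min_eq_left h2, abs_of_nonneg (by linarith), abs_of_nonneg (by linarith)]
    ring
  · rw [max_eq_right h1, min_eq_right h2, abs_of_nonneg (by linarith), abs_of_nonpos (by linarith)]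
    ring
  · rw [max_eq_left h1, min_eq_left h2, abs_of_nonpos (by linarith), abs_of_nonneg (by linarith)]
    ring
  · rw [max_eq_left h1, min_eq_right h2, abs_of_nonpos (by linarith), abs_of_nonpos (by linarith)]
    ring

lemma mallowsWeight_pos (n : ℕ) (β : ℝ) (σ : Equiv.Perm (Fin n)) : 0 < mallowsWeight n β σ :=
  Real.exp_pos _

lemma mallowsWeight_mul_swap {n l : ℕ} (β : ℝ) (σ : Equiv.Perm (Fin n)) (i j : Fin n)
    (hi : (i : ℕ) < l) (hj : l ≤ (j : ℕ)) (hsi : (σ i : ℕ) < l) (hsj : l ≤ (σ j : ℕ)) :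
    mallowsWeight n β (σ * Equiv.swap i j) = mallowsWeight n β σ * Real.exp (-(2 * β *
      (min ((j : ℕ) : ℝ) ((σ j : ℕ) : ℝ) - max ((i : ℕ) : ℝ) ((σ i : ℕ) : ℝ)))) := by
  have h := l1Cost_mul_swap σ i j hi hj hsi hsj
  unfold l1Cost at h
  unfold mallowsWeight
  rw [h, ← Real.exp_add]
  congr 1
  ring

lemma one_sub_exp_neg_inv_le {y : ℝ} (hy : 0 < y) : (1 - Real.exp (-y))⁻¹ ≤ (1 + y) / y := by
  have h1 : Real.exp (-y) ≤ 1 / (1 + y) := by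
    rw [Real.exp_neg, ← one_div]
    exact one_div_le_one_div_of_le (by linarith) (by linarith [Real.add_one_le_exp y])
  have h2 : y / (1 + y) ≤ 1 - Real.exp (-y) := by
    have : y / (1 + y) = 1 - 1 / (1 + y) := by field_simp; ring
    linarith
  rw [← inv_div]
  exact inv_anti₀ (by positivity) h2

lemma sum_exp_neg_le {ι : Type*} (s : Finset ι) (f : ι → ℕ) (hf : Set.InjOn f s) {y : ℝ}
    (hy : 0 < y) : ∑ i ∈ s, Real.exp (-(y * f i)) ≤ (1 + y) / y := by
  have hlt : Real.exp (-y) < 1 := by rw [Real.exp_lt_one_iff]; linarith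
  have h1 : ∑ i ∈ s, Real.exp (-(y * f i)) = ∑ m ∈ s.image f, Real.exp (-y) ^ m := by
    rw [Finset.sum_image hf]
    refine Finset.sum_congr rfl fun i _ => ?_
    rw [← Real.exp_nat_mul]
    congr 1
    ring
  rw [h1]
  refine le_trans ((summable_geometric_of_lt_one (Real.exp_pos _).le hlt).sum_le_tsum _
    (fun _ _ => by positivity)) ?_
  rw [tsum_geometric_of_lt_one (Real.exp_pos _).le hlt]
  exact one_sub_exp_neg_inv_le hy

/-! ### Upper bound: uncrossing `k` -/

/-- The unnormalized mass of `{σ k ≥ l}`. -/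
noncomputable def tailMass (n : ℕ) (β : ℝ) (k : Fin n) (l : ℕ) : ℝ :=
  ∑ σ : Equiv.Perm (Fin n), if l ≤ (σ k : ℕ) then mallowsWeight n β σ else 0

/-- The unnormalized integral of the number of up-crossings of level `l` over `{σ k ≥ l}`. -/
noncomputable def crossMass (n : ℕ) (β : ℝ) (k : Fin n) (l : ℕ) : ℝ :=
  ∑ σ : Equiv.Perm (Fin n),
    if l ≤ (σ k : ℕ) then mallowsWeight n β σ * ((upCross l σ).card : ℝ) else 0

/-- The unnormalized integral of `exp (-2b (l - max {k, σ k}))` over `{σ k < l}`. -/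
noncomputable def lowMass (n : ℕ) (β b : ℝ) (k : Fin n) (l : ℕ) : ℝ :=
  ∑ σ : Equiv.Perm (Fin n), if (σ k : ℕ) < l then mallowsWeight n β σ *
    Real.exp (-(2 * b * ((l : ℝ) - max ((k : ℕ) : ℝ) ((σ k : ℕ) : ℝ)))) else 0

/-- For fixed `σ` the uncrossing gains are summable: at most two positions `j` share a given
value of `min {j, σ j}`. -/
lemma sum_exp_min_le {n l : ℕ} (σ : Equiv.Perm (Fin n)) {b : ℝ} (hb : 0 < b) (hb1 : b ≤ 1) :
    ∑ j ∈ Finset.univ.filter (fun j : Fin n => l ≤ (j : ℕ) ∧ l ≤ (σ j : ℕ)),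
      Real.exp (-(2 * b * (min ((j : ℕ) : ℝ) ((σ j : ℕ) : ℝ) - l))) ≤ 3 / b := by
  set s := Finset.univ.filter (fun j : Fin n => l ≤ (j : ℕ) ∧ l ≤ (σ j : ℕ)) with hs
  have hmem : ∀ j ∈ s, l ≤ (j : ℕ) ∧ l ≤ (σ j : ℕ) := fun j hj => (Finset.mem_filter.1 hj).2
  have h1 := sum_exp_neg_le s (fun j => (j : ℕ) - l) (fun x hx y hy h => by
    have := hmem x hx; have := hmem y hy; simp only at h; ext; omega)
    (y := 2 * b) (by positivity)
  have h2 := sum_exp_neg_le s (fun j => (σ j : ℕ) - l) (fun x hx y hy h => by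
    have := hmem x hx; have := hmem y hy; simp only at h
    apply σ.injective; ext; omega) (y := 2 * b) (by positivity)
  calc _ ≤ ∑ j ∈ s, (Real.exp (-(2 * b * (((j : ℕ) - l : ℕ) : ℝ)))
        + Real.exp (-(2 * b * (((σ j : ℕ) - l : ℕ) : ℝ)))) := by
        refine Finset.sum_le_sum fun j hj => ?_
        rw [Nat.cast_sub (hmem j hj).1, Nat.cast_sub (hmem j hj).2]
        rcases le_total ((j : ℕ) : ℝ) ((σ j : ℕ) : ℝ) with h | h
        · rw [min_eq_left h]; linarith [Real.exp_pos (-(2 * b * (((σ j : ℕ) : ℝ) - l)))]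
        · rw [min_eq_right h]; linarith [Real.exp_pos (-(2 * b * (((j : ℕ) : ℝ) - l)))]
    _ ≤ (1 + 2 * b) / (2 * b) + (1 + 2 * b) / (2 * b) := by
        rw [Finset.sum_add_distrib]; exact add_le_add h1 h2
    _ = (1 + 2 * b) / b := by field_simp; ring
    _ ≤ 3 / b := by gcongr; linarith

/-- Uncross `k` with each down-crosser of level `l`. -/
lemma crossMass_le {n l : ℕ} {β b : ℝ} (hb : 0 < b) (hb1 : b ≤ 1) (hbβ : b ≤ β) (k : Fin n)
    (hk : (k : ℕ) < l) : crossMass n β k l ≤ 3 / b * lowMass n β b k l := by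
  have e1 : crossMass n β k l = ∑ j : Fin n, ∑ σ : Equiv.Perm (Fin n),
      if l ≤ (σ k : ℕ) ∧ l ≤ (j : ℕ) ∧ (σ j : ℕ) < l then mallowsWeight n β σ else 0 := by
    rw [Finset.sum_comm]
    unfold crossMass
    refine Finset.sum_congr rfl fun σ _ => ?_
    rw [← card_downCross]
    split_ifs with h
    · simp only [h, true_and]
      rw [← Finset.sum_filter, Finset.sum_const, nsmul_eq_mul, mul_comm]; rfl
    · simp [h]
  have e2 : crossMass n β k l = ∑ j : Fin n, ∑ σ : Equiv.Perm (Fin n),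
      if l ≤ (σ j : ℕ) ∧ l ≤ (j : ℕ) ∧ (σ k : ℕ) < l then
        mallowsWeight n β (σ * Equiv.swap k j) else 0 := by
    rw [e1]
    refine Finset.sum_congr rfl fun j _ => ?_
    rw [← Equiv.sum_comp (Equiv.mulRight (Equiv.swap k j))]
    refine Finset.sum_congr rfl fun σ _ => ?_
    simp [Equiv.Perm.mul_apply]
  rw [e2, Finset.sum_comm]
  unfold lowMass
  rw [Finset.mul_sum]
  refine Finset.sum_le_sum fun σ _ => ?_
  by_cases h : (σ k : ℕ) < l
  · simp only [h, and_true, if_true]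
    rw [← Finset.sum_filter]
    calc _ ≤ ∑ j ∈ Finset.univ.filter (fun j : Fin n => l ≤ (j : ℕ) ∧ l ≤ (σ j : ℕ)),
          mallowsWeight n β σ *
            Real.exp (-(2 * b * ((l : ℝ) - max ((k : ℕ) : ℝ) ((σ k : ℕ) : ℝ)))) *
          Real.exp (-(2 * b * (min ((j : ℕ) : ℝ) ((σ j : ℕ) : ℝ) - l))) := by
          rw [show (Finset.univ.filter fun j : Fin n => l ≤ (σ j : ℕ) ∧ l ≤ (j : ℕ))
            = Finset.univ.filter (fun j : Fin n => l ≤ (j : ℕ) ∧ l ≤ (σ j : ℕ)) by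
              ext; simp [and_comm]]
          refine Finset.sum_le_sum fun j hj => ?_
          have hj' := (Finset.mem_filter.1 hj).2
          rw [mallowsWeight_mul_swap β σ k j hk hj'.1 h hj'.2,
            mul_assoc (mallowsWeight n β σ), ← Real.exp_add]
          refine mul_le_mul_of_nonneg_left (Real.exp_le_exp.2 ?_) (mallowsWeight_pos _ _ _).le
          have a1 : (l : ℝ) ≤ min ((j : ℕ) : ℝ) ((σ j : ℕ) : ℝ) :=
            le_min (by exact_mod_cast hj'.1) (by exact_mod_cast hj'.2)
          have a2 : max ((k : ℕ) : ℝ) ((σ k : ℕ) : ℝ) ≤ l :=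
            max_le (by exact_mod_cast hk.le) (by exact_mod_cast h.le)
          nlinarith [mul_nonneg (sub_nonneg.2 hbβ) (sub_nonneg.2 (a2.trans a1))]
      _ ≤ _ := by
          rw [← Finset.mul_sum, mul_comm (3 / b)]
          exact mul_le_mul_of_nonneg_left (sum_exp_min_le σ hb hb1)
            (mul_nonneg (mallowsWeight_pos _ _ _).le (Real.exp_pos _).le)
  · simp [h]

/-! ### Lower bound: a level is rarely crossed few times -/

lemma upCross_mul_swap_card {n l : ℕ} (σ : Equiv.Perm (Fin n)) (i j : Fin n)
    (hj : l ≤ (j : ℕ)) :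
    (upCross l (σ * Equiv.swap i j)).card ≤ (upCross l σ).card + 1 := by
  refine le_trans (Finset.card_le_card (t := insert i (upCross l σ)) ?_) (Finset.card_insert_le _ _)
  intro x hx
  unfold upCross at hx
  rw [Finset.mem_filter, Equiv.Perm.mul_apply] at hx
  simp only [upCross, Finset.mem_filter, Finset.mem_univ, true_and, Finset.mem_insert] at hx ⊢
  by_cases hxi : x = i
  · exact Or.inl hxi
  · have hxj : x ≠ j := by rintro rfl; omega
    rw [Equiv.swap_apply_of_ne_of_ne hxi hxj] at hx
    exact Or.inr hx

/-- At least `w - #upCross` positions in `[l - w, l)` stay below level `l`. -/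
lemma card_low_window {n l w : ℕ} (σ : Equiv.Perm (Fin n)) (hl : w ≤ l) (hn : l ≤ n) :
    w ≤ (Finset.univ.filter fun i : Fin n =>
      l ≤ (i : ℕ) + w ∧ (i : ℕ) < l ∧ (σ i : ℕ) < l).card + (upCross l σ).card := by
  have hc : (Finset.univ.filter fun i : Fin n => l ≤ (i : ℕ) + w ∧ (i : ℕ) < l).card = w := by
    have : ((Finset.univ.filter fun i : Fin n => l ≤ (i : ℕ) + w ∧ (i : ℕ) < l).map
        Fin.valEmbedding) = Finset.Ico (l - w) l := by
      ext x
      simp only [Finset.mem_map, Finset.mem_filter, Finset.mem_univ, true_and,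
        Fin.valEmbedding_apply, Finset.mem_Ico]
      constructor
      · rintro ⟨a, h, rfl⟩; omega
      · intro h; exact ⟨⟨x, by omega⟩, by simp only; omega, rfl⟩
    rw [← Finset.card_map Fin.valEmbedding, this, Nat.card_Ico]; omega
  calc w = _ := hc.symm
    _ ≤ _ := by
      refine le_trans (Finset.card_le_card ?_) (Finset.card_union_le _ _)
      intro x hx
      simp only [upCross, Finset.mem_filter, Finset.mem_univ, true_and, Finset.mem_union] at hx ⊢
      omega

/-- At least `w - #upCross` positions in `[l, l + w)` stay at level `l` or above. -/
lemma card_high_window {n l w : ℕ} (σ : Equiv.Perm (Fin n)) (hn : l + w ≤ n) :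
    w ≤ (Finset.univ.filter fun j : Fin n =>
      (j : ℕ) < l + w ∧ l ≤ (j : ℕ) ∧ l ≤ (σ j : ℕ)).card + (upCross l σ).card := by
  have hc : (Finset.univ.filter fun i : Fin n => (i : ℕ) < l + w ∧ l ≤ (i : ℕ)).card = w := by
    have : ((Finset.univ.filter fun i : Fin n => (i : ℕ) < l + w ∧ l ≤ (i : ℕ)).map
        Fin.valEmbedding) = Finset.Ico l (l + w) := by
      ext x
      simp only [Finset.mem_map, Finset.mem_filter, Finset.mem_univ, true_and,
        Fin.valEmbedding_apply, Finset.mem_Ico]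
      constructor
      · rintro ⟨a, h, rfl⟩; omega
      · intro h; exact ⟨⟨x, by omega⟩, by simp only; omega, rfl⟩
    rw [← Finset.card_map Fin.valEmbedding, this, Nat.card_Ico]; omega
  calc w = _ := hc.symm
    _ ≤ _ := by
      rw [← card_downCross]
      refine le_trans (Finset.card_le_card ?_) (Finset.card_union_le _ _)
      intro x hx
      simp only [downCross, Finset.mem_filter, Finset.mem_univ, true_and, Finset.mem_union] at hx ⊢
      omega

/-- Swapping non-crossing positions `i < l ≤ j` within distance `w` of level `l` adds a crossing at
bounded cost.  A permutation with at most `w / 2` crossings admits at least `(w / 2) ^ 2` such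
swaps, and a permutation with `D` crossings arises from at most `D ^ 2` of them. -/
lemma few_crossings_le {n l w : ℕ} {β : ℝ} (hβ : 0 < β) (k : Fin n) (hk : (k : ℕ) < l)
    (hl : w ≤ l) (hn : l + w ≤ n) :
    (((w : ℝ) / 2) ^ 2 * Real.exp (-(4 * β * w))) * (∑ σ : Equiv.Perm (Fin n),
      if l ≤ (σ k : ℕ) ∧ 2 * (upCross l σ).card ≤ w then mallowsWeight n β σ else 0)
    ≤ ((w : ℝ) / 2 + 1) * crossMass n β k l := by
  set G : Fin n → Fin n → Equiv.Perm (Fin n) → ℝ := fun i j σ =>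
    if (l ≤ (σ k : ℕ) ∧ 2 * (upCross l σ).card ≤ w) ∧
      ((i : ℕ) < l ∧ (σ i : ℕ) < l) ∧ (l ≤ (j : ℕ) ∧ l ≤ (σ j : ℕ))
    then mallowsWeight n β (σ * Equiv.swap i j) else 0 with hG
  set H : Fin n → Fin n → Equiv.Perm (Fin n) → ℝ := fun i j σ =>
    if (l ≤ (σ k : ℕ) ∧ 2 * (upCross l σ).card ≤ w + 2) ∧ i ∈ upCross l σ ∧ j ∈ downCross l σ
    then mallowsWeight n β σ else 0 with hH
  have hGH : ∀ i j σ, G i j σ ≤ H i j (σ * Equiv.swap i j) := by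
    intro i j σ
    simp only [hG]
    split_ifs with h
    · obtain ⟨⟨h1, h2⟩, ⟨h3, h4⟩, h5, h6⟩ := h
      have hki : k ≠ i := by rintro rfl; omega
      have hkj : k ≠ j := by rintro rfl; omega
      have hc := upCross_mul_swap_card σ i j h5
      have hk1 : (σ * Equiv.swap i j) k = σ k := by
        rw [Equiv.Perm.mul_apply, Equiv.swap_apply_of_ne_of_ne hki hkj]
      have hi1 : i ∈ upCross l (σ * Equiv.swap i j) := by
        unfold upCross
        rw [Finset.mem_filter, Equiv.Perm.mul_apply, Equiv.swap_apply_left]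
        exact ⟨Finset.mem_univ _, h3, h6⟩
      have hj1 : j ∈ downCross l (σ * Equiv.swap i j) := by
        unfold downCross
        rw [Finset.mem_filter, Equiv.Perm.mul_apply, Equiv.swap_apply_right]
        exact ⟨Finset.mem_univ _, h5, h4⟩
      simp only [hH]
      rw [if_pos ⟨⟨by rw [hk1]; exact h1, by omega⟩, hi1, hj1⟩]
    · simp only [hH]
      split_ifs
      · exact (mallowsWeight_pos _ _ _).le
      · exact le_rfl
  have step1 : (((w : ℝ) / 2) ^ 2 * Real.exp (-(4 * β * w))) * (∑ σ : Equiv.Perm (Fin n),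
      if l ≤ (σ k : ℕ) ∧ 2 * (upCross l σ).card ≤ w then mallowsWeight n β σ else 0)
      ≤ ∑ σ : Equiv.Perm (Fin n), ∑ i, ∑ j, G i j σ := by
    rw [Finset.mul_sum]
    refine Finset.sum_le_sum fun σ _ => ?_
    have hGnn : ∀ i j, 0 ≤ G i j σ := by
      intro i j
      simp only [hG]
      split_ifs
      · exact (mallowsWeight_pos _ _ _).le
      · exact le_rfl
    split_ifs with h
    · set P := Finset.univ.filter fun i : Fin n =>
        l ≤ (i : ℕ) + w ∧ (i : ℕ) < l ∧ (σ i : ℕ) < l with hP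
      set Q := Finset.univ.filter fun j : Fin n =>
        (j : ℕ) < l + w ∧ l ≤ (j : ℕ) ∧ l ≤ (σ j : ℕ) with hQ
      have cP : w ≤ P.card + (upCross l σ).card := card_low_window σ hl (by omega)
      have cQ : w ≤ Q.card + (upCross l σ).card := card_high_window σ hn
      have cP' : (w : ℝ) / 2 ≤ P.card := by
        have : (w : ℝ) ≤ 2 * P.card := by exact_mod_cast (by omega : w ≤ 2 * P.card)
        linarith
      have cQ' : (w : ℝ) / 2 ≤ Q.card := by
        have : (w : ℝ) ≤ 2 * Q.card := by exact_mod_cast (by omega : w ≤ 2 * Q.card)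
        linarith
      calc _ ≤ ((P.card : ℝ) * Q.card) * (Real.exp (-(4 * β * w)) * mallowsWeight n β σ) := by
            rw [mul_assoc, sq]
            exact mul_le_mul_of_nonneg_right (mul_le_mul cP' cQ' (by positivity) (by positivity))
              (mul_nonneg (Real.exp_pos _).le (mallowsWeight_pos _ _ _).le)
        _ = ∑ i ∈ P, ∑ j ∈ Q, Real.exp (-(4 * β * w)) * mallowsWeight n β σ := by
            simp only [Finset.sum_const, nsmul_eq_mul]; ring
        _ ≤ ∑ i ∈ P, ∑ j ∈ Q, G i j σ := by
            refine Finset.sum_le_sum fun i hi => Finset.sum_le_sum fun j hj => ?_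
            obtain ⟨a1, a2, a3⟩ := (Finset.mem_filter.1 hi).2
            obtain ⟨b1, b2, b3⟩ := (Finset.mem_filter.1 hj).2
            simp only [hG]
            rw [if_pos ⟨h, ⟨a2, a3⟩, b2, b3⟩, mallowsWeight_mul_swap β σ i j a2 b2 a3 b3,
              mul_comm]
            refine mul_le_mul_of_nonneg_left (Real.exp_le_exp.2 ?_) (mallowsWeight_pos _ _ _).le
            have c1 : (l : ℝ) ≤ (i : ℕ) + w := by exact_mod_cast a1
            have c2 : ((j : ℕ) : ℝ) ≤ l + w := by exact_mod_cast b1.le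
            have d1 := min_le_left ((j : ℕ) : ℝ) ((σ j : ℕ) : ℝ)
            have d2 := le_max_left ((i : ℕ) : ℝ) ((σ i : ℕ) : ℝ)
            have : min ((j : ℕ) : ℝ) ((σ j : ℕ) : ℝ) - max ((i : ℕ) : ℝ) ((σ i : ℕ) : ℝ)
              ≤ 2 * w := by linarith
            nlinarith
        _ ≤ ∑ i, ∑ j, G i j σ := by
            refine le_trans (Finset.sum_le_sum fun i _ => Finset.sum_le_univ_sum_of_nonneg
              (hGnn i)) ?_
            exact Finset.sum_le_univ_sum_of_nonneg fun i => Finset.sum_nonneg fun j _ => hGnn i j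
    · rw [mul_zero]
      exact Finset.sum_nonneg fun i _ => Finset.sum_nonneg fun j _ => hGnn i j
  have step2 : ∑ σ : Equiv.Perm (Fin n), ∑ i, ∑ j, G i j σ
      ≤ ∑ σ : Equiv.Perm (Fin n), ∑ i, ∑ j, H i j σ := by
    have comm3 : ∀ f : Fin n → Fin n → Equiv.Perm (Fin n) → ℝ,
        ∑ σ : Equiv.Perm (Fin n), ∑ i, ∑ j, f i j σ = ∑ i, ∑ j, ∑ σ, f i j σ := by
      intro f
      rw [Finset.sum_comm]
      exact Finset.sum_congr rfl fun i _ => Finset.sum_comm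
    rw [comm3, comm3]
    refine Finset.sum_le_sum fun i _ => Finset.sum_le_sum fun j _ => ?_
    rw [← Equiv.sum_comp (Equiv.mulRight (Equiv.swap i j)) (H i j)]
    exact Finset.sum_le_sum fun σ _ => hGH i j σ
  refine step1.trans (step2.trans ?_)
  unfold crossMass
  rw [Finset.mul_sum]
  refine Finset.sum_le_sum fun σ _ => ?_
  simp only [hH]
  by_cases h : l ≤ (σ k : ℕ) ∧ 2 * (upCross l σ).card ≤ w + 2
  · simp only [h, true_and, and_self, if_true]
    have e : ∑ i, ∑ j, (if i ∈ upCross l σ ∧ j ∈ downCross l σ then mallowsWeight n β σ else 0)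
        = (upCross l σ).card * ((upCross l σ).card * mallowsWeight n β σ) := by
      have : ∀ i : Fin n, ∑ j, (if i ∈ upCross l σ ∧ j ∈ downCross l σ
          then mallowsWeight n β σ else 0)
          = if i ∈ upCross l σ then (upCross l σ).card * mallowsWeight n β σ else 0 := by
        intro i
        split_ifs with hi
        · simp [hi, card_downCross]
        · simp [hi]
      simp_rw [this]
      simp
    rw [e]
    have hc : ((upCross l σ).card : ℝ) ≤ (w : ℝ) / 2 + 1 := by
      have : (2 : ℝ) * (upCross l σ).card ≤ w + 2 := by exact_mod_cast h.2
      linarith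
    rw [mul_comm (mallowsWeight n β σ)]
    exact mul_le_mul_of_nonneg_right hc
      (mul_nonneg (Nat.cast_nonneg _) (mallowsWeight_pos _ _ _).le)
  · simp only [h, false_and, if_false, Finset.sum_const_zero]
    split_ifs
    · exact mul_nonneg (by positivity)
        (mul_nonneg (mallowsWeight_pos _ _ _).le (Nat.cast_nonneg _))
    · simp

/-- The absolute constant in `tailMass_le`. -/
noncomputable def tailConst : ℝ := 12 * (1 + 3 * Real.exp 4)

lemma tailConst_ge : 12 ≤ tailConst := by
  unfold tailConst
  linarith [Real.exp_pos 4]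

lemma tailMass_nonneg (n : ℕ) (β : ℝ) (k : Fin n) (l : ℕ) : 0 ≤ tailMass n β k l :=
  Finset.sum_nonneg fun σ _ => by
    split_ifs
    · exact (mallowsWeight_pos _ _ _).le
    · exact le_rfl

lemma tailMass_le_crossMass {n l : ℕ} {β : ℝ} (k : Fin n) (hk : (k : ℕ) < l) :
    tailMass n β k l ≤ crossMass n β k l := by
  refine Finset.sum_le_sum fun σ _ => ?_
  split_ifs with h
  · have : 1 ≤ (upCross l σ).card := Finset.card_pos.2 ⟨k, by simp [upCross, hk, h]⟩
    have : (1 : ℝ) ≤ (upCross l σ).card := by exact_mod_cast this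
    nlinarith [mallowsWeight_pos n β σ]
  · exact le_rfl

/-- On `{σ k ≥ l}` the mean number of crossings of level `l` is at least of order `w`, provided
`w ≤ β⁻¹` and level `l` is at distance at least `w` from both ends of `[n]`. -/
lemma window_tailMass_le {n l w : ℕ} {β : ℝ} (hβ : 0 < β) (k : Fin n) (hk : (k : ℕ) < l)
    (hw : 1 ≤ w) (hwβ : β * w ≤ 1) (hl : w ≤ l) (hn : l + w ≤ n) :
    (w : ℝ) / 2 * tailMass n β k l ≤ (1 + 3 * Real.exp 4) * crossMass n β k l := by
  set few := ∑ σ : Equiv.Perm (Fin n),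
      if l ≤ (σ k : ℕ) ∧ 2 * (upCross l σ).card ≤ w then mallowsWeight n β σ else 0 with hfew
  set many := ∑ σ : Equiv.Perm (Fin n),
      if l ≤ (σ k : ℕ) ∧ ¬ 2 * (upCross l σ).card ≤ w then mallowsWeight n β σ else 0 with hmany
  have hsum : tailMass n β k l = few + many := by
    rw [hfew, hmany, ← Finset.sum_add_distrib]
    refine Finset.sum_congr rfl fun σ _ => ?_
    by_cases h1 : l ≤ (σ k : ℕ) <;> by_cases h2 : 2 * (upCross l σ).card ≤ w <;> simp [h1, h2]
  have hw' : (1 : ℝ) ≤ w := by exact_mod_cast hw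
  have hmany' : (w : ℝ) / 2 * many ≤ crossMass n β k l := by
    rw [hmany, Finset.mul_sum]
    refine Finset.sum_le_sum fun σ _ => ?_
    by_cases h1 : l ≤ (σ k : ℕ) <;> by_cases h2 : 2 * (upCross l σ).card ≤ w
    · simp only [h1, h2, not_true_eq_false, and_false, if_false, if_true, mul_zero]
      exact mul_nonneg (mallowsWeight_pos _ _ _).le (Nat.cast_nonneg _)
    · simp only [h1, h2, not_false_eq_true, and_self, if_true]
      rw [mul_comm]
      refine mul_le_mul_of_nonneg_left ?_ (mallowsWeight_pos _ _ _).le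
      have : (w : ℝ) ≤ 2 * (upCross l σ).card := by
        exact_mod_cast (by omega : w ≤ 2 * (upCross l σ).card)
      linarith
    · simp [h1]
    · simp [h1]
  have hfew0 : 0 ≤ few := Finset.sum_nonneg fun σ _ => by
    split_ifs
    · exact (mallowsWeight_pos _ _ _).le
    · exact le_rfl
  have hcr : 0 ≤ crossMass n β k l := (tailMass_nonneg _ _ _ _).trans (tailMass_le_crossMass k hk)
  have h1 := few_crossings_le hβ k hk hl hn
  rw [← hfew] at h1
  have hexp : Real.exp (-4) ≤ Real.exp (-(4 * β * w)) := Real.exp_le_exp.2 (by nlinarith)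
  have h2 : ((w : ℝ) / 2) * ((w : ℝ) / 2 * Real.exp (-4) * few)
      ≤ ((w : ℝ) / 2) * (3 * crossMass n β k l) := by
    calc _ = ((w : ℝ) / 2) ^ 2 * Real.exp (-4) * few := by ring
      _ ≤ ((w : ℝ) / 2) ^ 2 * Real.exp (-(4 * β * w)) * few := by gcongr
      _ ≤ _ := h1
      _ ≤ _ := by nlinarith
  have h3 := le_of_mul_le_mul_left h2 (by linarith)
  have h4 : (w : ℝ) / 2 * few ≤ 3 * Real.exp 4 * crossMass n β k l := by
    have e : Real.exp 4 * Real.exp (-4) = 1 := by rw [← Real.exp_add]; simp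
    calc (w : ℝ) / 2 * few = Real.exp 4 * ((w : ℝ) / 2 * Real.exp (-4) * few) := by
          rw [show Real.exp 4 * ((w : ℝ) / 2 * Real.exp (-4) * few)
            = (Real.exp 4 * Real.exp (-4)) * ((w : ℝ) / 2 * few) by ring, e, one_mul]
      _ ≤ Real.exp 4 * (3 * crossMass n β k l) := by gcongr
      _ = _ := by ring
  rw [hsum]
  linarith

/-- The window length `⌊b⁻¹⌋`, with `b = min {β, 1}`. -/
noncomputable def win (β : ℝ) : ℕ := ⌊(min β 1)⁻¹⌋₊

lemma win_spec {β : ℝ} (hβ : 0 < β) :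
    1 ≤ win β ∧ min β 1 * win β ≤ 1 ∧ 1 ≤ 2 * (min β 1 * win β) := by
  have hb : 0 < min β 1 := lt_min hβ one_pos
  have hb1 : 1 ≤ (min β 1)⁻¹ := (one_le_inv₀ hb).2 (min_le_right _ _)
  have h1 : 1 ≤ win β := Nat.one_le_floor_iff _ |>.2 hb1
  have h2 : (win β : ℝ) ≤ (min β 1)⁻¹ := Nat.floor_le (by positivity)
  have h3 : (min β 1)⁻¹ < win β + 1 := Nat.lt_floor_add_one _
  have h1' : (1 : ℝ) ≤ win β := by exact_mod_cast h1
  have e : min β 1 * (min β 1)⁻¹ = 1 := mul_inv_cancel₀ hb.ne'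
  refine ⟨h1, ?_, ?_⟩
  · calc _ ≤ min β 1 * (min β 1)⁻¹ := by gcongr
      _ = 1 := e
  · have : (min β 1)⁻¹ ≤ 2 * win β := by linarith
    calc (1 : ℝ) = min β 1 * (min β 1)⁻¹ := e.symm
      _ ≤ min β 1 * (2 * win β) := by gcongr
      _ = _ := by ring

/-- The upper and lower bounds for `crossMass` combined; the factors `b⁻¹` cancel. -/
lemma tailMass_le {n l : ℕ} {β : ℝ} (hβ : 0 < β) (k : Fin n) (hk : (k : ℕ) < l)
    (hl : win β ≤ l) (hn : l + win β ≤ n) :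
    tailMass n β k l ≤ tailConst * lowMass n β (min β 1) k l := by
  have hb : 0 < min β 1 := lt_min hβ one_pos
  obtain ⟨w1, w2, w3⟩ := win_spec hβ
  have hA := crossMass_le hb (min_le_right β 1) (min_le_left β 1) k hk
  have hq := tailMass_nonneg n β k l
  have hcr : 0 ≤ crossMass n β k l := (tailMass_nonneg _ _ _ _).trans (tailMass_le_crossMass k hk)
  have hB : (win β : ℝ) / 2 * tailMass n β k l ≤ (1 + 3 * Real.exp 4) * crossMass n β k l := by
    rcases le_total β 1 with h | h
    · rw [min_eq_left h] at w2
      exact window_tailMass_le hβ k hk w1 w2 hl hn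
    · have hw : win β = 1 := by simp [win, min_eq_right h]
      rw [hw]
      nlinarith [tailMass_le_crossMass (β := β) k hk, Real.exp_pos 4]
  set b := min β 1
  calc tailMass n β k l ≤ (2 * (b * win β)) * tailMass n β k l := by nlinarith
    _ = 4 * b * ((win β : ℝ) / 2 * tailMass n β k l) := by ring
    _ ≤ 4 * b * ((1 + 3 * Real.exp 4) * (3 / b * lowMass n β b k l)) := 
        mul_le_mul_of_nonneg_left (hB.trans (mul_le_mul_of_nonneg_left hA (by positivity)))
          (by positivity)
    _ = _ := by unfold tailConst; field_simp; ring

/-! ### Exponential decay -/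

/-- The unnormalized integral of `exp (-2b (l - max {k, σ k})₊)`; for `b = β` it is the
unnormalized probability of `b_k ≥ l`. -/
noncomputable def softTail (n : ℕ) (β b : ℝ) (k : Fin n) (l : ℕ) : ℝ :=
  ∑ σ : Equiv.Perm (Fin n), mallowsWeight n β σ *
    Real.exp (-(2 * b * ((l - max (k : ℕ) (σ k : ℕ) : ℕ) : ℝ)))

lemma softTail_eq {n l : ℕ} {β b : ℝ} (k : Fin n) (hk : (k : ℕ) < l) :
    softTail n β b k l = tailMass n β k l + lowMass n β b k l := by
  unfold softTail tailMass lowMass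
  rw [← Finset.sum_add_distrib]
  refine Finset.sum_congr rfl fun σ _ => ?_
  by_cases h : l ≤ (σ k : ℕ)
  · rw [if_pos h, if_neg (by omega), show l - max (k : ℕ) (σ k : ℕ) = 0 by omega]
    simp
  · rw [if_neg h, if_pos (by omega), zero_add, Nat.cast_sub (by omega), Nat.cast_max]

lemma softTail_succ {n l : ℕ} {β b : ℝ} (k : Fin n) (hk : (k : ℕ) ≤ l) :
    softTail n β b k (l + 1) = Real.exp (-(2 * b)) * softTail n β b k l
      + (1 - Real.exp (-(2 * b))) * tailMass n β k (l + 1) := by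
  unfold softTail tailMass
  rw [Finset.mul_sum, Finset.mul_sum, ← Finset.sum_add_distrib]
  refine Finset.sum_congr rfl fun σ _ => ?_
  by_cases h : l + 1 ≤ (σ k : ℕ)
  · rw [if_pos h, show l + 1 - max (k : ℕ) (σ k : ℕ) = 0 by omega,
      show l - max (k : ℕ) (σ k : ℕ) = 0 by omega]
    simp
    ring
  · rw [if_neg h, mul_zero, add_zero, mul_left_comm, ← Real.exp_add,
      show l + 1 - max (k : ℕ) (σ k : ℕ) = (l - max (k : ℕ) (σ k : ℕ)) + 1 by omega]
    push_cast
    congr 2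
    ring

lemma softTail_nonneg (n : ℕ) (β b : ℝ) (k : Fin n) (l : ℕ) : 0 ≤ softTail n β b k l :=
  Finset.sum_nonneg fun _ _ => mul_nonneg (mallowsWeight_pos _ _ _).le (Real.exp_pos _).le

/-- The exponential rate of decay of `softTail`, per unit of `b`. -/
noncomputable def rate : ℝ := 1 / (1 + tailConst)

lemma rate_pos : 0 < rate := by
  have := tailConst_ge
  unfold rate
  positivity

lemma rate_le : rate ≤ 1 / 2 := by
  have := tailConst_ge
  unfold rate
  exact one_div_le_one_div_of_le (by norm_num) (by linarith)

/-- One-step contraction.  By `softTail_succ`, passing to the next level multiplies all of the mass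
but that of `{σ k ≥ l + 1}` by `exp (-2b)`, and by `tailMass_le` that exceptional mass is at most a
fixed fraction `1 - rate < 1` of the whole. -/
lemma softTail_step {n l : ℕ} {β : ℝ} (hβ : 0 < β) (k : Fin n) (hk : (k : ℕ) ≤ l)
    (hl : win β ≤ l + 1) (hn : l + 1 + win β ≤ n) :
    softTail n β (min β 1) k (l + 1)
      ≤ Real.exp (-(rate * min β 1)) * softTail n β (min β 1) k l := by
  have hb : 0 < min β 1 := lt_min hβ one_pos
  have hb1 : min β 1 ≤ 1 := min_le_right _ _
  have h1 := tailMass_le hβ k (Nat.lt_succ_of_le hk) hl hn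
  have h2 := softTail_eq (β := β) (b := min β 1) k (Nat.lt_succ_of_le hk)
  have h3 := softTail_succ (β := β) (b := min β 1) k hk
  have hC := tailConst_ge
  have hr := rate_pos
  have hr1 := rate_le
  have hV := softTail_nonneg n β (min β 1) k (l + 1)
  have hV0 := softTail_nonneg n β (min β 1) k l
  set b := min β 1
  set V' := softTail n β b k (l + 1)
  set V := softTail n β b k l
  set q := tailMass n β k (l + 1)
  simp only [Nat.succ_eq_add_one] at h1 h2
  have hq : q ≤ (1 - rate) * V' := by
    have e : (1 - rate) = tailConst / (1 + tailConst) := by unfold rate; field_simp; ring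
    rw [e, div_mul_eq_mul_div, le_div_iff₀ (by linarith)]
    nlinarith
  set E := Real.exp (2 * b)
  have hE : 1 + 2 * b ≤ E := by linarith [Real.add_one_le_exp (2 * b)]
  have hEE : E * Real.exp (-(2 * b)) = 1 := by rw [← Real.exp_add]; simp
  have h4 : E * V' = V + (E - 1) * q := by
    rw [h3]; linear_combination (V - q) * hEE
  have h5 : V' * (1 + rate * (E - 1)) ≤ V := by
    nlinarith [mul_le_mul_of_nonneg_left hq (by linarith : (0 : ℝ) ≤ E - 1)]
  have h6 : V' * (1 + 2 * (rate * b)) ≤ V := by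
    refine le_trans (mul_le_mul_of_nonneg_left ?_ hV) h5
    nlinarith
  -- `1 - y ≤ exp (-y)` and `(1 - y) (1 + 2 y) ≥ 1` for `0 ≤ y ≤ 1/2`
  have hy : rate * b ≤ 1 / 2 := by nlinarith
  have hy0 : 0 < rate * b := by positivity
  have h7 : 1 - rate * b ≤ Real.exp (-(rate * b)) := by
    linarith [Real.add_one_le_exp (-(rate * b))]
  have h8 : 1 ≤ (1 + 2 * (rate * b)) * (1 - rate * b) := by nlinarith
  calc V' ≤ V' * ((1 + 2 * (rate * b)) * (1 - rate * b)) := by nlinarith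
    _ = (1 - rate * b) * (V' * (1 + 2 * (rate * b))) := by ring
    _ ≤ (1 - rate * b) * V := mul_le_mul_of_nonneg_left h6 (by linarith)
    _ ≤ _ := by gcongr

lemma softTail_anti {n : ℕ} {β b : ℝ} (hb : 0 ≤ b) (k : Fin n) {l m : ℕ} (h : l ≤ m) :
    softTail n β b k m ≤ softTail n β b k l := by
  refine Finset.sum_le_sum fun σ _ => mul_le_mul_of_nonneg_left (Real.exp_le_exp.2 ?_)
    (mallowsWeight_pos _ _ _).le
  have : ((l - max (k : ℕ) (σ k : ℕ) : ℕ) : ℝ) ≤ ((m - max (k : ℕ) (σ k : ℕ) : ℕ) : ℝ) := by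
    exact_mod_cast (by omega)
  nlinarith

lemma softTail_le_total {n : ℕ} {β b : ℝ} (hb : 0 ≤ b) (k : Fin n) (l : ℕ) :
    softTail n β b k l ≤ ∑ σ : Equiv.Perm (Fin n), mallowsWeight n β σ := by
  refine Finset.sum_le_sum fun σ _ => ?_
  refine mul_le_of_le_one_right (mallowsWeight_pos _ _ _).le (Real.exp_le_one_iff.2 ?_)
  have : (0 : ℝ) ≤ ((l - max (k : ℕ) (σ k : ℕ) : ℕ) : ℝ) := Nat.cast_nonneg _
  nlinarith

/-- Exponential decay of `softTail`.  The factor `exp 2` pays for the `2 * win β` levels that are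
too close to `k` or to `n` for `softTail_step` to apply. -/
lemma softTail_le {n l : ℕ} {β : ℝ} (hβ : 0 < β) (k : Fin n) (hn : l < n) :
    softTail n β (min β 1) k l
      ≤ Real.exp 2 * Real.exp (-(rate * min β 1 * ((l : ℝ) - (k : ℕ))))
        * ∑ σ : Equiv.Perm (Fin n), mallowsWeight n β σ := by
  have hb : 0 < min β 1 := lt_min hβ one_pos
  obtain ⟨w1, w2, w3⟩ := win_spec hβ
  have hr := rate_pos
  have hr1 := rate_le
  have hZ : 0 ≤ ∑ σ : Equiv.Perm (Fin n), mallowsWeight n β σ :=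
    Finset.sum_nonneg fun σ _ => (mallowsWeight_pos _ _ _).le
  set Z := ∑ σ : Equiv.Perm (Fin n), mallowsWeight n β σ
  have key : ∀ m : ℕ, (k : ℕ) + win β + m + win β ≤ n →
      softTail n β (min β 1) k ((k : ℕ) + win β + m)
        ≤ Real.exp (-(rate * min β 1 * m)) * Z := by
    intro m
    induction m with
    | zero =>
      intro _
      simpa using softTail_le_total hb.le k _
    | succ m ih =>
      intro hm
      have h1 := softTail_step hβ k (l := (k : ℕ) + win β + m) (by omega) (by omega) (by omega)
      rw [← add_assoc]
      refine h1.trans ?_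
      calc _ ≤ Real.exp (-(rate * min β 1)) * (Real.exp (-(rate * min β 1 * m)) * Z) := by
            gcongr; exact ih (by omega)
        _ = _ := by
            rw [← mul_assoc, ← Real.exp_add]; congr 2; push_cast; ring
  rw [← Real.exp_add]
  by_cases h : (k : ℕ) + 2 * win β ≤ l
  · obtain ⟨m, rfl⟩ := Nat.exists_eq_add_of_le h
    refine (softTail_anti hb.le k (show (k : ℕ) + win β + m ≤ (k : ℕ) + 2 * win β + m by omega)).trans
      ((key m (by omega)).trans (mul_le_mul_of_nonneg_right (Real.exp_le_exp.2 ?_) hZ))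
    push_cast
    nlinarith
  · refine (softTail_le_total hb.le k l).trans (le_mul_of_one_le_left hZ (Real.one_le_exp ?_))
    have h' : (l : ℝ) ≤ (k : ℕ) + 2 * win β := by exact_mod_cast (by omega)
    have h2 : min β 1 * ((l : ℝ) - (k : ℕ)) ≤ 2 := by
      calc _ ≤ min β 1 * (2 * win β) := by gcongr; linarith
        _ ≤ 2 := by linarith
    nlinarith [mul_le_mul_of_nonneg_left h2 hr.le]

/-! ### From the tail bound to the event `K_{t,r}` -/

lemma expMeasure_Ici_le {ρ : ℝ} (hρ : 0 < ρ) (m : ℕ) :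
    ProbabilityTheory.expMeasure ρ (Set.Ici (m : ℝ)) ≤ ENNReal.ofReal (Real.exp (-(ρ * m))) := by
  have := ProbabilityTheory.isProbabilityMeasure_expMeasure hρ
  have hatom : ProbabilityTheory.expMeasure ρ {(m : ℝ)} = 0 :=
    (withDensity_absolutelyContinuous volume _) (by simp)
  have h1 : ProbabilityTheory.expMeasure ρ (Set.Ici (m : ℝ))
      ≤ ProbabilityTheory.expMeasure ρ (Set.Ioi (m : ℝ)) := by
    rw [← Set.Ioi_union_left]
    refine (measure_union_le _ _).trans ?_
    rw [hatom, add_zero]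
  refine h1.trans ?_
  rw [← Set.compl_Iic, prob_compl_eq_one_sub measurableSet_Iic, ← ProbabilityTheory.ofReal_cdf,
    ProbabilityTheory.cdf_expMeasure_eq hρ, if_pos (Nat.cast_nonneg m), ← ENNReal.ofReal_one,
    ← ENNReal.ofReal_sub]
  · simp
  · have : 0 ≤ ρ * m := by positivity
    linarith [Real.exp_le_one_iff.2 (neg_nonpos.2 this)]

lemma measurable_bVal (n : ℕ) (k : Fin n) :
    Measurable fun ω : Equiv.Perm (Fin n) × (Fin n → ℝ) => bVal n ω k := by
  unfold bVal
  refine Measurable.add ?_ ((measurable_pi_apply k).comp measurable_snd)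
  exact (measurable_from_top (f := fun σ : Equiv.Perm (Fin n) =>
    max ((k : ℕ) : ℝ) ((σ k : ℕ) : ℝ))).comp measurable_fst

/-- `P(b_k ≥ l) ≤ C exp (-c b (l - k))` with `b = min {β, 1}`. -/
lemma hitRun_bVal_le {n : ℕ} {β : ℝ} (hβ : 0 < β) (k l : Fin n) :
    hitRunMeasure n β {ω | ((l : ℕ) : ℝ) ≤ bVal n ω k}
      ≤ ENNReal.ofReal (Real.exp 2 *
        Real.exp (-(rate * min β 1 * (((l : ℕ) : ℝ) - ((k : ℕ) : ℝ))))) := by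
  have : IsProbabilityMeasure (ProbabilityTheory.expMeasure (2 * β)) :=
    ProbabilityTheory.isProbabilityMeasure_expMeasure (by positivity)
  have hb : 0 < min β 1 := lt_min hβ one_pos
  have hZ : 0 < ∑ σ : Equiv.Perm (Fin n), mallowsWeight n β σ :=
    Finset.sum_pos (fun σ _ => mallowsWeight_pos _ _ _) Finset.univ_nonempty
  have hp : ∀ σ, 0 ≤ mallowsProb n β σ := fun σ =>
    div_nonneg (mallowsWeight_pos _ _ _).le hZ.le
  have hmeas : MeasurableSet {ω : Equiv.Perm (Fin n) × (Fin n → ℝ) |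
      ((l : ℕ) : ℝ) ≤ bVal n ω k} := measurableSet_le measurable_const (measurable_bVal n k)
  have hfib : ∀ σ : Equiv.Perm (Fin n),
      (Measure.pi fun _ : Fin n => ProbabilityTheory.expMeasure (2 * β))
        (Prod.mk σ ⁻¹' {ω | ((l : ℕ) : ℝ) ≤ bVal n ω k})
      ≤ ENNReal.ofReal (Real.exp (-(2 * min β 1 *
          (((l : ℕ) - max (k : ℕ) (σ k : ℕ) : ℕ) : ℝ)))) := by
    intro σ
    rcases Nat.eq_zero_or_pos ((l : ℕ) - max (k : ℕ) (σ k : ℕ)) with h | h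
    · rw [h]
      simpa using prob_le_one
    · have hcast : ((((l : ℕ) - max (k : ℕ) (σ k : ℕ) : ℕ)) : ℝ)
          = ((l : ℕ) : ℝ) - max ((k : ℕ) : ℝ) ((σ k : ℕ) : ℝ) := by
        rw [Nat.cast_sub (by omega), Nat.cast_max]
      have hset : (Prod.mk σ ⁻¹' {ω | ((l : ℕ) : ℝ) ≤ bVal n ω k})
          = Function.eval k ⁻¹' (Set.Ici ((((l : ℕ) - max (k : ℕ) (σ k : ℕ) : ℕ)) : ℝ)) := by
        ext e
        simp only [Set.mem_preimage, Set.mem_ofPred_eq, bVal, Set.mem_Ici, Function.eval, hcast]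
        constructor <;> intro h' <;> linarith
      rw [hset, (measurePreserving_eval (fun _ : Fin n => ProbabilityTheory.expMeasure (2 * β))
        k).measure_preimage measurableSet_Ici.nullMeasurableSet]
      refine (expMeasure_Ici_le (by positivity) _).trans
        (ENNReal.ofReal_le_ofReal (Real.exp_le_exp.2 ?_))
      have : min β 1 ≤ β := min_le_left _ _
      gcongr
  unfold hitRunMeasure
  rw [Measure.prod_apply hmeas]
  unfold mallowsMeasure
  rw [lintegral_finsetSum_measure]
  calc _ ≤ ∑ σ : Equiv.Perm (Fin n), ENNReal.ofReal (mallowsProb n β σ *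
          Real.exp (-(2 * min β 1 * (((l : ℕ) - max (k : ℕ) (σ k : ℕ) : ℕ) : ℝ)))) := by
        refine Finset.sum_le_sum fun σ _ => ?_
        rw [lintegral_smul_measure, lintegral_dirac' _ measurable_from_top, smul_eq_mul,
          ENNReal.ofReal_mul (hp σ)]
        exact mul_le_mul_right (hfib σ) _
    _ = ENNReal.ofReal (softTail n β (min β 1) k (l : ℕ) /
          ∑ σ : Equiv.Perm (Fin n), mallowsWeight n β σ) := by
        rw [← ENNReal.ofReal_sum_of_nonneg (fun σ _ => mul_nonneg (hp σ)
          (Real.exp_pos _).le)]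
        unfold softTail mallowsProb
        rw [Finset.sum_div]
        congr 1
        exact Finset.sum_congr rfl fun σ _ => by ring
    _ ≤ _ := by
        refine ENNReal.ofReal_le_ofReal ?_
        rw [div_le_iff₀ hZ]
        exact softTail_le hβ k l.2

/-- If no `k` with `l - k > r / 2` lies in `H_l`, then `#H_l ≤ r / 2`, so that both requirements of
`K_{t,r}` at `l` hold. -/
lemma Kevent_at {n : ℕ} {β r : ℝ} (hβ : 0 < β) (hr : 2 ≤ r)
    (ω : Equiv.Perm (Fin n) × (Fin n → ℝ)) (l : Fin n)
    (h : ∀ k : Fin n, r / 2 < ((l : ℕ) : ℝ) - ((k : ℕ) : ℝ) → ¬ ((l : ℕ) : ℝ) ≤ bVal n ω k) :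
    ((((Hset n ω l).sup fun j => (l : ℕ) - (j : ℕ)) : ℕ) : ℝ) ≤ r ∧
        (Nval n ω l : ℝ) ≤ r * (min β 1)⁻¹ := by
  have hb : 0 < min β 1 := lt_min hβ one_pos
  have hmem : ∀ k ∈ Hset n ω l, (k : ℕ) < l ∧ (l : ℕ) - (k : ℕ) ≤ ⌊r / 2⌋₊ := by
    intro k hk
    obtain ⟨h1, h2⟩ := (Finset.mem_filter.1 hk).2
    refine ⟨h1, Nat.le_floor ?_⟩
    have h1' : (k : ℕ) < l := h1
    rw [Nat.cast_sub h1'.le]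
    by_contra h3
    exact h k (not_le.1 h3) h2
  have hfl : ((⌊r / 2⌋₊ : ℕ) : ℝ) ≤ r / 2 := Nat.floor_le (by linarith)
  constructor
  · have : ((Hset n ω l).sup fun j => (l : ℕ) - (j : ℕ)) ≤ ⌊r / 2⌋₊ :=
      Finset.sup_le fun k hk => (hmem k hk).2
    have : ((((Hset n ω l).sup fun j => (l : ℕ) - (j : ℕ)) : ℕ) : ℝ) ≤ (⌊r / 2⌋₊ : ℕ) := by
      exact_mod_cast this
    linarith
  · have hcard : (Hset n ω l).card ≤ ⌊r / 2⌋₊ := by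
      have : (Hset n ω l).card ≤ (Finset.Icc 1 ⌊r / 2⌋₊).card := by
        refine Finset.card_le_card_of_injOn (fun k => (l : ℕ) - (k : ℕ)) ?_ ?_
        · intro k hk
          have := hmem k hk
          simp only [Finset.coe_Icc, Set.mem_Icc]
          omega
        · intro x hx y hy hxy
          have := hmem x hx
          have := hmem y hy
          simp only at hxy
          ext
          omega
      simpa using this
    have hcard' : ((Hset n ω l).card : ℝ) ≤ r / 2 := le_trans (by exact_mod_cast hcard) hfl
    have hinv : 1 ≤ (min β 1)⁻¹ := (one_le_inv₀ hb).2 (min_le_right _ _)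
    unfold Nval
    push_cast
    nlinarith

lemma card_window_le {n : ℕ} (s : Fin n) {X : ℝ} (hX : 1 ≤ X) :
    ((Finset.univ.filter fun l : Fin n =>
      ((s : ℕ) : ℝ) - X ≤ ((l : ℕ) : ℝ) ∧ l ≤ s).card : ℝ) ≤ 2 * X := by
  have h : (Finset.univ.filter fun l : Fin n =>
      ((s : ℕ) : ℝ) - X ≤ ((l : ℕ) : ℝ) ∧ l ≤ s).card ≤ (Finset.range (⌊X⌋₊ + 1)).card := by
    refine Finset.card_le_card_of_injOn (fun l => (s : ℕ) - (l : ℕ)) ?_ ?_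
    · intro l hl
      obtain ⟨h1, h2⟩ := (Finset.mem_filter.1 hl).2
      have h2' : (l : ℕ) ≤ s := h2
      simp only [Finset.coe_range, Set.mem_Iio]
      refine Nat.lt_succ_of_le (Nat.le_floor ?_)
      rw [Nat.cast_sub h2']
      linarith
    · intro x hx y hy hxy
      have h1 : (x : ℕ) ≤ s := (Finset.mem_filter.1 hx).2.2
      have h2 : (y : ℕ) ≤ s := (Finset.mem_filter.1 hy).2.2
      simp only at hxy
      ext
      omega
  rw [Finset.card_range] at h
  have h' : ((Finset.univ.filter fun l : Fin n =>
      ((s : ℕ) : ℝ) - X ≤ ((l : ℕ) : ℝ) ∧ l ≤ s).card : ℝ) ≤ (⌊X⌋₊ : ℕ) + 1 := by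
    exact_mod_cast h
  linarith [Nat.floor_le (show 0 ≤ X by linarith)]

lemma sum_far_le {n : ℕ} {β r : ℝ} (hβ : 0 < β) (hr : 0 ≤ r) (l : Fin n) :
    ∑ k ∈ Finset.univ.filter (fun k : Fin n => r / 2 < ((l : ℕ) : ℝ) - ((k : ℕ) : ℝ)),
      Real.exp 2 * Real.exp (-(rate * min β 1 * (((l : ℕ) : ℝ) - ((k : ℕ) : ℝ))))
    ≤ Real.exp 2 * (4 / (rate * min β 1)) * Real.exp (-(rate / 4 * (min β 1 * r))) := by
  have hb : 0 < min β 1 := lt_min hβ one_pos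
  have hb1 : min β 1 ≤ 1 := min_le_right _ _
  have hr0 := rate_pos
  have hr1 := rate_le
  set b := min β 1
  set K := Finset.univ.filter (fun k : Fin n => r / 2 < ((l : ℕ) : ℝ) - ((k : ℕ) : ℝ))
  have hK : ∀ k ∈ K, r / 2 < ((l : ℕ) : ℝ) - ((k : ℕ) : ℝ) ∧ (k : ℕ) < l := by
    intro k hk
    have h1 := (Finset.mem_filter.1 hk).2
    refine ⟨h1, ?_⟩
    have : ((k : ℕ) : ℝ) < ((l : ℕ) : ℝ) := by linarith
    exact_mod_cast this
  have hgeo := sum_exp_neg_le K (fun k => (l : ℕ) - (k : ℕ)) (fun x hx y hy hxy => by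
    have := hK x hx
    have := hK y hy
    simp only at hxy
    ext
    omega) (y := rate * b / 2) (by positivity)
  have hy : (1 + rate * b / 2) / (rate * b / 2) ≤ 4 / (rate * b) := by
    rw [div_le_div_iff₀ (by positivity) (by positivity)]
    have : rate * b ≤ 1 := by nlinarith
    nlinarith [mul_pos hr0 hb]
  calc _ ≤ ∑ k ∈ K, Real.exp 2 * Real.exp (-(rate / 4 * (b * r))) *
        Real.exp (-(rate * b / 2 * (((l : ℕ) - (k : ℕ) : ℕ) : ℝ))) := by
        refine Finset.sum_le_sum fun k hk => ?_
        rw [mul_assoc (Real.exp 2), ← Real.exp_add (-(rate / 4 * (b * r)))]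
        refine mul_le_mul_of_nonneg_left (Real.exp_le_exp.2 ?_) (Real.exp_pos _).le
        rw [Nat.cast_sub (hK k hk).2.le]
        nlinarith [mul_le_mul_of_nonneg_left (hK k hk).1.le (mul_pos hr0 hb).le]
    _ ≤ Real.exp 2 * Real.exp (-(rate / 4 * (b * r))) * (4 / (rate * b)) := by
        rw [← Finset.mul_sum]
        exact mul_le_mul_of_nonneg_left (hgeo.trans hy) (by positivity)
    _ = _ := by ring

/-- There are absolute constants `C₀ ≥ 2` and `C, c > 0` such that for all `n ≥ 1`,
`β > 0`, `s ∈ [n]`, `t ∈ [n]`, and real `r ≥ C₀ max{β⁻¹, 1}`: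
`P((K_{t,r})ᶜ) ≤ C r² t max{β⁻⁶, 1} exp(-c min{β^{1/2}, 1} √r)`. -/
theorem statement14 :
    ∃ C₀ C c : ℝ, 2 ≤ C₀ ∧ 0 < C ∧ 0 < c ∧
      ∀ n : ℕ, 0 < n → ∀ β : ℝ, 0 < β → ∀ s : Fin n, ∀ t : ℕ, 1 ≤ t → t ≤ n →
        ∀ r : ℝ, C₀ * max β⁻¹ 1 ≤ r →
          hitRunMeasure n β (Kevent n β s t r)ᶜ
            ≤ ENNReal.ofReal
                (C * r ^ 2 * t * max (β ^ 6)⁻¹ 1 *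
                  Real.exp (-c * min (Real.sqrt β) 1 * Real.sqrt r)) := by
  refine ⟨2, 8 * Real.exp 2 / rate, rate / 4, le_rfl,
    div_pos (mul_pos (by norm_num) (Real.exp_pos _)) rate_pos, by linarith [rate_pos], ?_⟩
  intro n _ β hβ s t ht _ r hr
  have hb : 0 < min β 1 := lt_min hβ one_pos
  have hb1 : min β 1 ≤ 1 := min_le_right _ _
  have hr2 : 2 ≤ r := by linarith [le_max_right β⁻¹ 1]
  have hrate := rate_pos
  have ht1 : (1 : ℝ) ≤ t := by exact_mod_cast ht
  have hbr : 1 ≤ min β 1 * r := by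
    rcases le_total β 1 with h | h
    · rw [min_eq_left h]
      have h1 : β⁻¹ ≤ r := by linarith [le_max_left β⁻¹ 1, inv_pos.2 hβ]
      calc (1 : ℝ) = β * β⁻¹ := (mul_inv_cancel₀ hβ.ne').symm
        _ ≤ β * r := by gcongr
    · rw [min_eq_right h]
      linarith
  -- the exponential bound is weakened to the square root, using `b r ≥ 1`
  have hsqrt : min (Real.sqrt β) 1 * Real.sqrt r ≤ min β 1 * r := by
    have e : min (Real.sqrt β) 1 * Real.sqrt r = Real.sqrt (min β 1 * r) := by
      rw [Real.sqrt_mul hb.le]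
      congr 1
      rcases le_total β 1 with h | h
      · rw [min_eq_left h, min_eq_left (Real.sqrt_le_one.2 h)]
      · rw [min_eq_right h, min_eq_right (Real.one_le_sqrt.2 h), Real.sqrt_one]
    rw [e, Real.sqrt_le_left (by linarith)]
    nlinarith
  have hpow : (min β 1 ^ 4)⁻¹ * (min β 1)⁻¹ ≤ max (β ^ 6)⁻¹ 1 := by
    rcases le_total β 1 with h | h
    · rw [min_eq_left h]
      refine le_trans ?_ (le_max_left _ _)
      rw [← mul_inv]
      refine inv_anti₀ (by positivity) ?_
      calc β ^ 6 = β ^ 4 * β * β := by ring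
        _ ≤ β ^ 4 * β * 1 := by gcongr
        _ = _ := by ring
    · rw [min_eq_right h]
      simp
  have hX : 1 ≤ r * t * (min β 1 ^ 4)⁻¹ := by
    have h4 : 1 ≤ (min β 1 ^ 4)⁻¹ := (one_le_inv₀ (by positivity)).2 (pow_le_one₀ hb.le hb1)
    have : 1 ≤ r * t := by nlinarith
    nlinarith
  set L := Finset.univ.filter fun l : Fin n =>
    ((s : ℕ) : ℝ) - r * t * (min β 1 ^ 4)⁻¹ ≤ ((l : ℕ) : ℝ) ∧ l ≤ s with hL
  set K : Fin n → Finset (Fin n) := fun l =>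
    Finset.univ.filter (fun k : Fin n => r / 2 < ((l : ℕ) : ℝ) - ((k : ℕ) : ℝ)) with hK
  have hcover : (Kevent n β s t r)ᶜ ⊆
      ⋃ l ∈ L, ⋃ k ∈ K l, {ω | ((l : ℕ) : ℝ) ≤ bVal n ω k} := by
    intro ω hω
    by_contra hno
    refine hω fun l h1 h2 => Kevent_at hβ hr2 ω l fun k hk hbk => hno ?_
    simp only [Set.mem_iUnion]
    exact ⟨l, Finset.mem_filter.2 ⟨Finset.mem_univ _, h1, h2⟩, k,
      Finset.mem_filter.2 ⟨Finset.mem_univ _, hk⟩, hbk⟩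
  set T := Real.exp 2 * (4 / (rate * min β 1)) * Real.exp (-(rate / 4 * (min β 1 * r))) with hT
  have hT0 : 0 ≤ T := by positivity
  calc hitRunMeasure n β (Kevent n β s t r)ᶜ
      ≤ ∑ l ∈ L, ∑ k ∈ K l, hitRunMeasure n β {ω | ((l : ℕ) : ℝ) ≤ bVal n ω k} := by
        refine (measure_mono hcover).trans ((measure_biUnion_finset_le _ _).trans ?_)
        exact Finset.sum_le_sum fun l _ => measure_biUnion_finset_le _ _
    _ ≤ ∑ l ∈ L, ENNReal.ofReal T := by
        refine Finset.sum_le_sum fun l _ => ?_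
        refine (Finset.sum_le_sum fun k _ => hitRun_bVal_le hβ k l).trans ?_
        rw [← ENNReal.ofReal_sum_of_nonneg (fun k _ => by positivity)]
        exact ENNReal.ofReal_le_ofReal (sum_far_le hβ (by linarith) l)
    _ = ENNReal.ofReal (L.card * T) := by
        rw [Finset.sum_const, nsmul_eq_mul, ENNReal.ofReal_mul (Nat.cast_nonneg _),
          ENNReal.ofReal_natCast]
    _ ≤ _ := by
        refine ENNReal.ofReal_le_ofReal ?_
        have hexp : Real.exp (-(rate / 4 * (min β 1 * r)))
            ≤ Real.exp (-(rate / 4) * min (Real.sqrt β) 1 * Real.sqrt r) := by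
          refine Real.exp_le_exp.2 ?_
          nlinarith [mul_le_mul_of_nonneg_left hsqrt hrate.le]
        have hrr : r ≤ r ^ 2 := by nlinarith
        calc (L.card : ℝ) * T ≤ 2 * (r * t * (min β 1 ^ 4)⁻¹) * T := by
              gcongr
              exact card_window_le s hX
          _ = 8 * Real.exp 2 / rate * r * t * ((min β 1 ^ 4)⁻¹ * (min β 1)⁻¹)
                * Real.exp (-(rate / 4 * (min β 1 * r))) := by
              rw [hT]
              field_simp
              ring
          _ ≤ _ := by gcongr
end

section
/- For every positive integer n ≥ 2, every β > 0, and every s ∈ [n], one has P_{n,β}({σ ∈ S_n : σ(s) ≠ s}) ≥ e^{-2β} / 2. -/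
/-!
Let `t` be a neighbour of `s`. Precomposing `σ` with the transposition `(s t)` raises the `L¹`
distance by at most `2`, so it costs at most a factor `e^{-2β}` in weight
(`exp_mul_mallowsWeight_le`). If `σ` fixes `s`, then `σ ∘ (s t)` does not. Hence, with `g` the
weight restricted to permutations moving `s`, one has `e^{-2β} w(σ) ≤ g(σ) + g(σ ∘ (s t))` for
every `σ`, and summing over `σ` gives `e^{-2β} Z ≤ 2 ∑ g`.
-/

open scoped BigOperators Classical

/-- The probability of the event `p` under the Mallows permutation model `P_{n,β}`. -/
noncomputable def mallowsP (n : ℕ) (β : ℝ) (p : Equiv.Perm (Fin n) → Prop) : ℝ :=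
  ∑ σ : Equiv.Perm (Fin n), if p σ then mallowsProb n β σ else 0

/-- Precomposition with an adjacent transposition loses at most a factor `e^{-2β}` of weight. -/
lemma exp_mul_mallowsWeight_le {n : ℕ} {β : ℝ} (hβ : 0 < β) {s t : Fin n}
    (hst : |((s : ℕ) : ℝ) - ((t : ℕ) : ℝ)| ≤ 1) (σ : Equiv.Perm (Fin n)) :
    Real.exp (-(2 * β)) * mallowsWeight n β σ ≤ mallowsWeight n β (σ * Equiv.swap s t) := by
  have hre : ∑ i : Fin n, |(((σ * Equiv.swap s t) i : ℕ) : ℝ) - ((i : ℕ) : ℝ)|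
      = ∑ i : Fin n, |((σ i : ℕ) : ℝ) - ((Equiv.swap s t i : ℕ) : ℝ)| := by
    rw [← Equiv.sum_comp (Equiv.swap s t)]
    simp [Equiv.Perm.mul_apply]
  have hle : ∑ i : Fin n, |((σ i : ℕ) : ℝ) - ((Equiv.swap s t i : ℕ) : ℝ)|
      ≤ ∑ i : Fin n, (|((σ i : ℕ) : ℝ) - ((i : ℕ) : ℝ)|
        + ((if i = s then 1 else 0) + (if i = t then 1 else 0))) := by
    refine Finset.sum_le_sum fun i _ => ?_
    refine (abs_sub_le _ ((i : ℕ) : ℝ) _).trans (add_le_add le_rfl ?_)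
    by_cases h1 : i = s
    · subst h1
      rw [Equiv.swap_apply_left, if_pos rfl]
      split_ifs <;> linarith
    · by_cases h2 : i = t
      · subst h2
        rw [Equiv.swap_apply_right, if_neg h1, if_pos rfl, abs_sub_comm]
        linarith
      · simp [Equiv.swap_apply_of_ne_of_ne h1 h2, h1, h2]
  rw [Finset.sum_add_distrib, Finset.sum_add_distrib] at hle
  simp only [Finset.sum_ite_eq', Finset.mem_univ, if_true] at hle
  unfold mallowsWeight
  rw [← Real.exp_add, hre]
  apply Real.exp_le_exp.mpr
  nlinarith

lemma exists_adjacent {n : ℕ} (hn : 2 ≤ n) (s : Fin n) :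
    ∃ t : Fin n, t ≠ s ∧ |((s : ℕ) : ℝ) - ((t : ℕ) : ℝ)| ≤ 1 := by
  by_cases h : (s : ℕ) + 1 < n
  · refine ⟨⟨s + 1, h⟩, by simp [Fin.ext_iff], by simp⟩
  · refine ⟨⟨s - 1, by omega⟩, by simp only [ne_eq, Fin.ext_iff]; omega, ?_⟩
    have h1 : 1 ≤ (s : ℕ) := by omega
    simp [Nat.cast_sub h1]

/-- For every `n ≥ 2`, `β > 0`, and `s ∈ [n]`: `P_{n,β}(σ(s) ≠ s) ≥ e^{-2β}/2`. -/
theorem statement17 (n : ℕ) (hn : 2 ≤ n) (β : ℝ) (hβ : 0 < β) (s : Fin n) :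
    Real.exp (-(2 * β)) / 2 ≤ mallowsP n β (fun σ => σ s ≠ s) := by
  obtain ⟨t, hts, hst⟩ := exists_adjacent hn s
  have hpos : ∀ σ, 0 < mallowsWeight n β σ := fun σ => Real.exp_pos _
  set g : Equiv.Perm (Fin n) → ℝ := fun σ => if σ s ≠ s then mallowsWeight n β σ else 0 with hg
  have hg0 : ∀ σ, 0 ≤ g σ := by
    intro σ
    simp only [hg]
    split_ifs
    exacts [(hpos σ).le, le_rfl]
  have hZ : 0 < ∑ τ : Equiv.Perm (Fin n), mallowsWeight n β τ :=
    Finset.sum_pos (fun σ _ => hpos σ) Finset.univ_nonempty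
  have hP : mallowsP n β (fun σ => σ s ≠ s)
      = (∑ σ, g σ) / ∑ τ : Equiv.Perm (Fin n), mallowsWeight n β τ := by
    unfold mallowsP mallowsProb
    rw [Finset.sum_div]
    refine Finset.sum_congr rfl fun σ _ => ?_
    simp only [hg]
    split_ifs <;> simp
  have key : ∀ σ, Real.exp (-(2 * β)) * mallowsWeight n β σ
      ≤ g σ + g (σ * Equiv.swap s t) := by
    intro σ
    by_cases h : σ s = s
    · have h' : (σ * Equiv.swap s t) s ≠ s := by
        rw [Equiv.Perm.mul_apply, Equiv.swap_apply_left]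
        exact fun h2 => hts (σ.injective (h2.trans h.symm))
      have hgσ : g (σ * Equiv.swap s t) = mallowsWeight n β (σ * Equiv.swap s t) := if_pos h'
      have := exp_mul_mallowsWeight_le hβ hst σ
      linarith [hg0 σ]
    · have hgσ : g σ = mallowsWeight n β σ := if_pos h
      have h1 : Real.exp (-(2 * β)) ≤ 1 := Real.exp_le_one_iff.mpr (by linarith)
      have := mul_le_of_le_one_left (hpos σ).le h1
      linarith [hg0 (σ * Equiv.swap s t)]
  have hsum := Finset.sum_le_sum fun σ (_ : σ ∈ Finset.univ) => key σ
  have hshift : ∑ σ, g (σ * Equiv.swap s t) = ∑ σ, g σ :=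
    Equiv.sum_comp (Equiv.mulRight (Equiv.swap s t)) g
  rw [← Finset.mul_sum, Finset.sum_add_distrib, hshift] at hsum
  rw [hP, le_div_iff₀ hZ]
  linarith
end
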